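/- arXiv:1504.00233 — 2 statements merged into one kernel-verified Lean document; each statement's English description precedes it below -/
import Mathlib

section
/- The smooth max-divergence is bounded by the minimal (sandwiched) Rényi divergence: let ρ be an n×n density matrix, σ an n×n positive definite complex matrix, ε ∈ (0,1), and α > 1. Set c = (1−α)/(2α), D̃_α(ρ‖σ) = (1/(α−1))·ln(Re tr((σ^c · ρ · σ^c)^α)) and g(ε) = −ln(1 − √(1−ε²)). Then there exists an n×n positive semidefinite matrix ρ̃ with tr ρ̃ ≤ 1 such that P(ρ̃, ρ) ≤ ε and ρ̃ ≤ exp(D̃_α(ρ‖σ) + g(ε)/(α−1))·σ in the Loewner order. -/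
/-!
Let `s = 1 - √(1 - ε²)`, let `L = exp (λ) σ` be the claimed upper bound, `P` the spectral
projection of `ρ - L` onto its positive part and `S = P (ρ - L)` that positive part. Then
`ρ ≤ L + S`.

*Truncation* (`exists_truncation`). With `K = L + S` and the contraction `G = L^{1/2} K^{-1/2}`,
the matrix `ρ̃ = G ρ Gᴴ` satisfies `ρ̃ ≤ G K Gᴴ = L` and `tr ρ̃ ≤ 1`. Its root fidelity with `ρ` is
the trace norm of `ρ^{1/2} G ρ^{1/2}`, so it is at least `Re tr (G ρ)`. As `Re G ≤ 1`,
`1 - Re tr (G ρ) ≤ Re tr ((1 - G) K) = tr K - tr (L^{1/2} K^{1/2}) ≤ tr K - tr L = tr S`, the last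
inequality by operator monotonicity of the square root. So it suffices that `tr S ≤ s`.

*Tail bound.* Put `p = tr (P ρ)`, `q = tr (P σ)` and `Q = tr (σ^c ρ σ^c)^α`, so that
`tr S = p - e^λ q`. If `tr S > 0`, then `q ≤ e^{-λ} p`, and data processing for the measurement
`P` (`proj_data_processing`) reads `p^α ≤ Q q^{α-1}`. Together with `e^{(α-1)λ} = Q / s` this
gives `tr S ≤ p ≤ s`.

Data processing follows from Hölder's inequality (`trace_holder`) applied to
`p = tr ((σ^c ρ σ^c) (σ^{-c} P σ^{-c}))`, and the Araki–Lieb–Thirring inequality for projections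
(`trace_mpow_proj_le`). Both rest on Jensen's inequality `⟨v, M^a v⟩^r ≤ ⟨v, M^{ar} v⟩` for
vectors of norm at most one (`jensen_entry`).
-/

open Matrix
open scoped ComplexOrder

/-- Real power of a Hermitian matrix via the spectral decomposition (junk value `0`
if the matrix is not Hermitian). -/
noncomputable def mpow {d : Type*} [Fintype d] [DecidableEq d]
    (M : Matrix d d ℂ) (c : ℝ) : Matrix d d ℂ :=
  if hM : M.IsHermitian then hM.cfc (fun t => t ^ c) else 0

/-- The generalized fidelity of sub-normalized states. -/
noncomputable def gFidelity {d : Type*} [Fintype d] [DecidableEq d]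
    (ρ τ : Matrix d d ℂ) : ℝ :=
  (((mpow (mpow τ (1/2) * ρ * mpow τ (1/2)) (1/2)).trace).re
    + Real.sqrt ((1 - ρ.trace.re) * (1 - τ.trace.re))) ^ 2

/-- The purified distance of sub-normalized states, `P(ρ,τ) = √(1 - F̄(ρ,τ))`. -/
noncomputable def purifiedDist {d : Type*} [Fintype d] [DecidableEq d]
    (ρ τ : Matrix d d ℂ) : ℝ :=
  Real.sqrt (1 - gFidelity ρ τ)

/-- The sandwiched (minimal) Rényi divergence
`D̃_α(ρ‖σ) = (1/(α-1))·ln (Re tr ((σ^c ρ σ^c)^α))` with `c = (1-α)/(2α)`. -/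
noncomputable def sandwichedD {d : Type*} [Fintype d] [DecidableEq d]
    (α : ℝ) (ρ σ : Matrix d d ℂ) : ℝ :=
  (1 / (α - 1)) * Real.log
    (((mpow (mpow σ ((1 - α) / (2 * α)) * ρ * mpow σ ((1 - α) / (2 * α))) α).trace).re)

/-! ### Powers of positive semidefinite matrices -/

section Helpers

variable {d : Type*} [Fintype d] [DecidableEq d]

lemma mpow_eq_cfc {M : Matrix d d ℂ} (hM : M.IsHermitian) (c : ℝ) :
    mpow M c = cfc (fun t : ℝ => t ^ c) M := by
  rw [mpow, dif_pos hM, hM.cfc_eq]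

lemma cfc_continuousOn (M : Matrix d d ℂ) (f : ℝ → ℝ) : ContinuousOn f (spectrum ℝ M) :=
  M.finite_real_spectrum.continuousOn f

lemma spectrum_nonneg' {M : Matrix d d ℂ} (hM : M.PosSemidef) {x : ℝ} (hx : x ∈ spectrum ℝ M) :
    0 ≤ x := by
  rw [hM.1.spectrum_real_eq_range_eigenvalues] at hx
  obtain ⟨i, rfl⟩ := hx
  exact hM.eigenvalues_nonneg i

lemma spectrum_pos' {M : Matrix d d ℂ} (hM : M.PosDef) {x : ℝ} (hx : x ∈ spectrum ℝ M) :
    0 < x := by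
  rw [hM.1.spectrum_real_eq_range_eigenvalues] at hx
  obtain ⟨i, rfl⟩ := hx
  exact hM.eigenvalues_pos i

open scoped MatrixOrder in
lemma cfc_posSemidef {M : Matrix d d ℂ} {f : ℝ → ℝ} (h : ∀ x ∈ spectrum ℝ M, 0 ≤ f x) :
    (cfc f M).PosSemidef :=
  Matrix.nonneg_iff_posSemidef.1 (cfc_nonneg h)

lemma mpow_posSemidef {M : Matrix d d ℂ} (hM : M.PosSemidef) (c : ℝ) :
    (mpow M c).PosSemidef := by
  rw [mpow_eq_cfc hM.1]
  exact cfc_posSemidef fun x hx => Real.rpow_nonneg (spectrum_nonneg' hM hx) c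

lemma mpow_mul_mpow {M : Matrix d d ℂ} (hM : M.PosDef) (a b : ℝ) :
    mpow M a * mpow M b = mpow M (a + b) := by
  rw [mpow_eq_cfc hM.1, mpow_eq_cfc hM.1, mpow_eq_cfc hM.1,
    ← cfc_mul _ _ M (cfc_continuousOn _ _) (cfc_continuousOn _ _)]
  exact cfc_congr fun x hx => (Real.rpow_add (spectrum_pos' hM hx) a b).symm

lemma mpow_half_mul_self {M : Matrix d d ℂ} (hM : M.PosSemidef) :
    mpow M (1 / 2) * mpow M (1 / 2) = M := by
  rw [mpow_eq_cfc hM.1, ← cfc_mul _ _ M (cfc_continuousOn _ _) (cfc_continuousOn _ _)]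
  conv_rhs => rw [← cfc_id ℝ M hM.1]
  refine cfc_congr fun x hx => ?_
  have := spectrum_nonneg' hM hx
  simp only [id]
  rw [← Real.sqrt_eq_rpow, Real.mul_self_sqrt this]

lemma mpow_one {M : Matrix d d ℂ} (hM : M.IsHermitian) : mpow M 1 = M := by
  rw [mpow_eq_cfc hM]
  simp only [Real.rpow_one]
  exact cfc_id' ℝ M hM

lemma mpow_zero {M : Matrix d d ℂ} (hM : M.IsHermitian) : mpow M 0 = 1 := by
  rw [mpow_eq_cfc hM]
  simp only [Real.rpow_zero]
  exact cfc_const_one ℝ M hM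

open scoped MatrixOrder Matrix.Norms.L2Operator in
/-- Operator monotonicity of the square root, transported from the C⋆-algebra of matrices. -/
lemma mpow_half_mono {L K : Matrix d d ℂ} (hL : L.PosSemidef) (hK : K.PosSemidef)
    (h : (K - L).PosSemidef) : (mpow K (1 / 2) - mpow L (1 / 2)).PosSemidef := by
  have key : ∀ M : Matrix d d ℂ, M.PosSemidef → mpow M (1 / 2) = CFC.sqrt M := by
    intro M hM
    rw [mpow_eq_cfc hM.1, CFC.sqrt_eq_real_sqrt M hM.nonneg, cfcₙ_eq_cfc]
    exact cfc_congr fun x _ => (Real.sqrt_eq_rpow x).symm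
  rw [key _ hL, key _ hK, ← Matrix.le_iff]
  exact CFC.sqrt_le_sqrt L K (Matrix.le_iff.2 h)

/-! ### Traces and diagonal entries in an eigenbasis -/

lemma hcfc_eq {M : Matrix d d ℂ} (hM : M.IsHermitian) (f : ℝ → ℝ) :
    hM.cfc f = (hM.eigenvectorUnitary : Matrix d d ℂ) *
      diagonal (fun i => ((f (hM.eigenvalues i) : ℝ) : ℂ)) *
      (hM.eigenvectorUnitary : Matrix d d ℂ)ᴴ := by
  rw [IsHermitian.cfc, Unitary.conjStarAlgAut_apply]
  rfl

lemma unitary_mul_conjTranspose {M : Matrix d d ℂ} (hM : M.IsHermitian) :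
    (hM.eigenvectorUnitary : Matrix d d ℂ) * (hM.eigenvectorUnitary : Matrix d d ℂ)ᴴ = 1 :=
  Unitary.coe_mul_star_self hM.eigenvectorUnitary

lemma conjTranspose_mul_unitary {M : Matrix d d ℂ} (hM : M.IsHermitian) :
    (hM.eigenvectorUnitary : Matrix d d ℂ)ᴴ * (hM.eigenvectorUnitary : Matrix d d ℂ) = 1 :=
  Unitary.coe_star_mul_self hM.eigenvectorUnitary

lemma spectral_form {M : Matrix d d ℂ} (hM : M.IsHermitian) :
    M = (hM.eigenvectorUnitary : Matrix d d ℂ) *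
      diagonal (fun i => ((hM.eigenvalues i : ℝ) : ℂ)) *
      (hM.eigenvectorUnitary : Matrix d d ℂ)ᴴ := by
  conv_lhs => rw [hM.spectral_theorem, Unitary.conjStarAlgAut_apply]
  rfl

lemma trace_conj_unitary {M : Matrix d d ℂ} (hM : M.IsHermitian) (A : Matrix d d ℂ) :
    ((hM.eigenvectorUnitary : Matrix d d ℂ)ᴴ * A *
      (hM.eigenvectorUnitary : Matrix d d ℂ)).trace = A.trace := by
  rw [Matrix.trace_mul_comm, ← Matrix.mul_assoc, unitary_mul_conjTranspose, Matrix.one_mul]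

lemma diag_conj_unitary {M : Matrix d d ℂ} (hM : M.IsHermitian) :
    (hM.eigenvectorUnitary : Matrix d d ℂ)ᴴ * M * (hM.eigenvectorUnitary : Matrix d d ℂ)
      = diagonal (fun i => ((hM.eigenvalues i : ℝ) : ℂ)) := by
  have h := conjTranspose_mul_unitary hM
  conv_lhs => enter [1, 2]; rw [spectral_form hM]
  calc _ = ((hM.eigenvectorUnitary : Matrix d d ℂ)ᴴ * (hM.eigenvectorUnitary : Matrix d d ℂ)) *
      diagonal (fun i => ((hM.eigenvalues i : ℝ) : ℂ)) *
      ((hM.eigenvectorUnitary : Matrix d d ℂ)ᴴ * (hM.eigenvectorUnitary : Matrix d d ℂ)) := by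
        simp only [Matrix.mul_assoc]
    _ = _ := by rw [h, Matrix.one_mul, Matrix.mul_one]

lemma trace_mpow {M : Matrix d d ℂ} (hM : M.IsHermitian) (c : ℝ) :
    (mpow M c).trace.re = ∑ i, hM.eigenvalues i ^ c := by
  rw [mpow, dif_pos hM, hcfc_eq, Matrix.trace_mul_comm, ← Matrix.mul_assoc,
    conjTranspose_mul_unitary, Matrix.one_mul, Matrix.trace_diagonal, Complex.re_sum]
  simp

lemma conj_diag_entry (C : Matrix d d ℂ) (v : d → ℝ) (k : d) :
    ((Cᴴ * diagonal (fun i => ((v i : ℝ) : ℂ)) * C) k k).re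
      = ∑ i, Complex.normSq (C i k) * v i := by
  rw [Matrix.mul_apply, Complex.re_sum]
  refine Finset.sum_congr rfl fun i _ => ?_
  rw [Matrix.mul_diagonal, Matrix.conjTranspose_apply]
  simp [Complex.normSq_apply]
  ring

lemma conj_mpow_entry {M : Matrix d d ℂ} (hM : M.IsHermitian) (c : ℝ) (B : Matrix d d ℂ) (k : d) :
    ((Bᴴ * mpow M c * B) k k).re =
      ∑ i, Complex.normSq (((hM.eigenvectorUnitary : Matrix d d ℂ)ᴴ * B) i k)
        * hM.eigenvalues i ^ c := by
  rw [← conj_diag_entry, mpow, dif_pos hM, hcfc_eq]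
  simp only [Matrix.conjTranspose_mul, Matrix.conjTranspose_conjTranspose, Matrix.mul_assoc]

/-- Jensen's inequality for the power functions: `⟨v, M ^ a v⟩ ^ r ≤ ⟨v, M ^ (a r) v⟩` for
every vector `v` of norm at most one, the vector being a column of `B`. -/
lemma jensen_entry {M : Matrix d d ℂ} (hM : M.PosSemidef) (a : ℝ) {r : ℝ} (hr : 1 ≤ r)
    (B : Matrix d d ℂ) (k : d) (hB : ((Bᴴ * B) k k).re ≤ 1) :
    ((Bᴴ * mpow M a * B) k k).re ^ r ≤ ((Bᴴ * mpow M (a * r) * B) k k).re := by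
  have hr0 : 0 < r := by linarith
  have hW := conj_mpow_entry hM.1 0 B k
  rw [mpow_zero hM.1, Matrix.mul_one] at hW
  simp only [Real.rpow_zero, mul_one] at hW
  rw [hW] at hB
  rw [conj_mpow_entry hM.1, conj_mpow_entry hM.1]
  set w : d → ℝ := fun i =>
    Complex.normSq (((hM.1.eigenvectorUnitary : Matrix d d ℂ)ᴴ * B) i k) with hw
  have hw0 : ∀ i, 0 ≤ w i := fun i => Complex.normSq_nonneg _
  have hz0 : ∀ i, 0 ≤ hM.1.eigenvalues i ^ a := fun i =>
    Real.rpow_nonneg (hM.eigenvalues_nonneg i) a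
  have h1 := Real.inner_le_weight_mul_Lp_of_nonneg Finset.univ hr w
    (fun i => hM.1.eigenvalues i ^ a) hw0 hz0
  have h2 : ∀ i, hM.1.eigenvalues i ^ (a * r) = (hM.1.eigenvalues i ^ a) ^ r := fun i =>
    Real.rpow_mul (hM.eigenvalues_nonneg i) a r
  simp only [h2]
  have hS0 : 0 ≤ ∑ i, w i * (hM.1.eigenvalues i ^ a) ^ r :=
    Finset.sum_nonneg fun i _ => mul_nonneg (hw0 i) (Real.rpow_nonneg (hz0 i) r)
  have h3 : (∑ i, w i) ^ (1 - r⁻¹) ≤ 1 :=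
    Real.rpow_le_one (Finset.sum_nonneg fun i _ => hw0 i) hB
      (by have := inv_le_one_of_one_le₀ hr; linarith)
  have h4 : ∑ i, w i * hM.1.eigenvalues i ^ a
      ≤ (∑ i, w i * (hM.1.eigenvalues i ^ a) ^ r) ^ r⁻¹ :=
    h1.trans (mul_le_of_le_one_left (Real.rpow_nonneg hS0 _) h3)
  calc (∑ i, w i * hM.1.eigenvalues i ^ a) ^ r
      ≤ ((∑ i, w i * (hM.1.eigenvalues i ^ a) ^ r) ^ r⁻¹) ^ r :=
        Real.rpow_le_rpow (Finset.sum_nonneg fun i _ => mul_nonneg (hw0 i) (hz0 i)) h4 hr0.le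
    _ = _ := Real.rpow_inv_rpow hS0 hr0.ne'

lemma posSemidef_diag_re {ι : Type*} {A : Matrix ι ι ℂ} (hA : A.PosSemidef) (i : ι) : 0 ≤ (A i i).re :=
  (Complex.le_def.1 (hA.diag_nonneg (i := i))).1

lemma posSemidef_trace_re {ι : Type*} [Fintype ι] {A : Matrix ι ι ℂ} (hA : A.PosSemidef) : 0 ≤ A.trace.re :=
  (Complex.le_def.1 hA.trace_nonneg).1

lemma trace_mul_re_nonneg {A B : Matrix d d ℂ} (hA : A.PosSemidef) (hB : B.PosSemidef) :
    0 ≤ (A * B).trace.re := by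
  have hs := mpow_posSemidef hA (1 / 2)
  have h := posSemidef_trace_re (hB.conjTranspose_mul_mul_same (mpow A (1 / 2)))
  rwa [hs.1.eq, Matrix.trace_mul_comm, ← Matrix.mul_assoc, mpow_half_mul_self hA] at h

/-! ### Hölder, Araki–Lieb–Thirring and data processing -/

/-- Hölder's inequality `tr (M T) ≤ ‖M‖_p ‖T‖_q` for positive semidefinite matrices: the
classical inequality on the diagonal in an eigenbasis of `M`, followed by Jensen for `T`. -/
lemma trace_holder {M T : Matrix d d ℂ} (hM : M.PosSemidef) (hT : T.PosSemidef) {p q : ℝ}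
    (hpq : p.HolderConjugate q) :
    (M * T).trace.re ≤ (mpow M p).trace.re ^ (1 / p) * (mpow T q).trace.re ^ (1 / q) := by
  set U : Matrix d d ℂ := (hM.1.eigenvectorUnitary : Matrix d d ℂ) with hU
  have hUU : Uᴴ * U = 1 := conjTranspose_mul_unitary hM.1
  have h1 : (M * T).trace.re = ∑ j, hM.1.eigenvalues j * ((Uᴴ * T * U) j j).re := by
    conv_lhs => rw [spectral_form hM.1, Matrix.mul_assoc, Matrix.mul_assoc, Matrix.trace_mul_comm]
    rw [Matrix.mul_assoc, Matrix.trace, Complex.re_sum]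
    refine Finset.sum_congr rfl fun j _ => ?_
    rw [Matrix.diag_apply, Matrix.diagonal_mul, Complex.re_ofReal_mul]
  have hT0 : ∀ j, 0 ≤ ((Uᴴ * T * U) j j).re := fun j =>
    posSemidef_diag_re (hT.conjTranspose_mul_mul_same U) j
  have h2 : ∑ j, ((Uᴴ * T * U) j j).re ^ q ≤ (mpow T q).trace.re := by
    rw [← trace_conj_unitary hM.1 (mpow T q), Matrix.trace, Complex.re_sum]
    refine Finset.sum_le_sum fun j _ => ?_
    have := jensen_entry hT 1 hpq.symm.lt.le U j (by rw [hUU]; simp)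
    rwa [mpow_one hT.1, one_mul] at this
  rw [h1, trace_mpow hM.1]
  refine (Real.inner_le_Lp_mul_Lq_of_nonneg Finset.univ hpq
    (fun j _ => hM.eigenvalues_nonneg j) (fun j _ => hT0 j)).trans ?_
  refine mul_le_mul_of_nonneg_left ?_ (Real.rpow_nonneg
    (Finset.sum_nonneg fun j _ => Real.rpow_nonneg (hM.eigenvalues_nonneg j) _) _)
  exact Real.rpow_le_rpow (Finset.sum_nonneg fun j _ => Real.rpow_nonneg (hT0 j) _) h2
    (one_div_nonneg.2 hpq.symm.nonneg)

/-- `X Xᴴ` and `Xᴴ X` have the same characteristic polynomial, hence the same power traces. -/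
lemma trace_mpow_comm (X : Matrix d d ℂ) (r : ℝ) :
    (mpow (X * Xᴴ) r).trace.re = (mpow (Xᴴ * X) r).trace.re := by
  have hA : (X * Xᴴ).IsHermitian := isHermitian_mul_conjTranspose_self X
  have hB : (Xᴴ * X).IsHermitian := isHermitian_conjTranspose_mul_self X
  rw [trace_mpow hA, trace_mpow hB,
    (hA.eigenvalues_eq_eigenvalues_iff hB).2 (Matrix.charpoly_mul_comm _ _)]

/-- The Araki–Lieb–Thirring inequality `tr (σ^{1/2r} P σ^{1/2r})^r ≤ tr (P σ)` for a
projection `P`. -/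
lemma trace_mpow_proj_le {σ P : Matrix d d ℂ} (hσ : σ.PosDef) (hP : P.IsHermitian)
    (hPP : P * P = P) {r : ℝ} (hr : 1 ≤ r) :
    (mpow (mpow σ (1 / (2 * r)) * P * mpow σ (1 / (2 * r))) r).trace.re ≤ (P * σ).trace.re := by
  have hr0 : 0 < r := by linarith
  set S := mpow σ (1 / (2 * r)) with hS
  have hSh : Sᴴ = S := (mpow_posSemidef hσ.posSemidef _).1.eq
  have hPh : Pᴴ = P := hP.eq
  have hX : S * P * S = (S * P) * (S * P)ᴴ := by
    rw [Matrix.conjTranspose_mul, hSh, hPh, Matrix.mul_assoc, Matrix.mul_assoc,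
      ← Matrix.mul_assoc P P, hPP]
  have hY : (S * P)ᴴ * (S * P) = P * mpow σ (1 / r) * P := by
    have : S * S = mpow σ (1 / r) := by
      rw [hS, mpow_mul_mpow hσ]; congr 1; field_simp; norm_num
    rw [Matrix.conjTranspose_mul, hSh, hPh, ← this]; simp only [Matrix.mul_assoc]
  have hYh : ((S * P)ᴴ * (S * P)).IsHermitian := isHermitian_conjTranspose_mul_self _
  rw [hX, trace_mpow_comm, trace_mpow hYh]
  set V : Matrix d d ℂ := (hYh.eigenvectorUnitary : Matrix d d ℂ) with hV
  have hVV : Vᴴ * V = 1 := conjTranspose_mul_unitary hYh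
  have hy : ∀ k, hYh.eigenvalues k = (((P * V)ᴴ * mpow σ (1 / r) * (P * V)) k k).re := by
    intro k
    have h := congrFun (congrFun (diag_conj_unitary hYh) k) k
    rw [Matrix.diagonal_apply_eq] at h
    have h' := congrArg Complex.re h
    rw [Complex.ofReal_re] at h'
    rw [← h', ← hV]
    congr 2
    rw [Matrix.conjTranspose_mul P V, hPh]
    conv_lhs => rw [hY]
    simp only [Matrix.mul_assoc]
  have hB : ∀ k, (((P * V)ᴴ * (P * V)) k k).re ≤ 1 := by
    intro k
    have h1 : (Vᴴ * ((1 - P)ᴴ * (1 - P)) * V).PosSemidef :=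
      (posSemidef_conjTranspose_mul_self (1 - P)).conjTranspose_mul_mul_same V
    have h2 := posSemidef_diag_re h1 k
    have h3 : (1 - P)ᴴ * (1 - P) = 1 - P := by
      rw [Matrix.conjTranspose_sub, Matrix.conjTranspose_one, hPh, Matrix.sub_mul, Matrix.mul_sub,
        Matrix.mul_sub, hPP]; simp
    have h4 : Vᴴ * (1 - P) * V = 1 - (P * V)ᴴ * (P * V) := by
      rw [Matrix.conjTranspose_mul, hPh, Matrix.mul_sub, Matrix.sub_mul, Matrix.mul_one, hVV,
        Matrix.mul_assoc Vᴴ P (P * V), ← Matrix.mul_assoc P P V, hPP, Matrix.mul_assoc]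
    rw [h3, h4, Matrix.sub_apply, Matrix.one_apply_eq, Complex.sub_re, Complex.one_re] at h2
    linarith
  have hsum : (P * σ).trace = ((P * V)ᴴ * σ * (P * V)).trace := by
    have : (P * V)ᴴ * σ * (P * V) = Vᴴ * (P * σ * P) * V := by
      rw [Matrix.conjTranspose_mul, hPh]; simp only [Matrix.mul_assoc]
    rw [this, hV, trace_conj_unitary hYh, Matrix.trace_mul_comm (P * σ) P, ← Matrix.mul_assoc, hPP]
  rw [hsum, Matrix.trace, Complex.re_sum]
  refine Finset.sum_le_sum fun k _ => ?_
  have := jensen_entry hσ.posSemidef (1 / r) hr (P * V) k (hB k)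
  rw [one_div_mul_cancel hr0.ne', mpow_one hσ.1] at this
  rw [hy]
  exact this

/-- Data processing for a two-outcome projective measurement, in multiplicative form:
`p ≤ Q^{1/α} q^{1-1/α}` with `p = tr (P ρ)`, `q = tr (P σ)`, `Q = tr (σ^c ρ σ^c)^α`. -/
lemma proj_data_processing {ρ σ P : Matrix d d ℂ} (hρ : ρ.PosSemidef) (hσ : σ.PosDef)
    (hP : P.IsHermitian) (hPP : P * P = P) {α : ℝ} (hα : 1 < α) :
    (P * ρ).trace.re ≤
      ((mpow (mpow σ ((1 - α) / (2 * α)) * ρ * mpow σ ((1 - α) / (2 * α))) α).trace.re) ^ (1 / α)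
        * (P * σ).trace.re ^ (1 - 1 / α) := by
  have hpq : α.HolderConjugate (Real.conjExponent α) := Real.HolderConjugate.conjExponent hα
  set r := Real.conjExponent α with hr
  have hr' : r = α / (α - 1) := rfl
  have hα0 : α ≠ 0 := by linarith
  have hα1 : α - 1 ≠ 0 := by linarith
  have h1r : 1 / r = 1 - 1 / α := by rw [hr']; field_simp
  have hc : 1 / (2 * r) = -((1 - α) / (2 * α)) := by rw [hr']; field_simp; ring
  set c := (1 - α) / (2 * α) with hcdef
  set S := mpow σ c with hS
  set R := mpow σ (1 / (2 * r)) with hR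
  have hSR : S * R = 1 := by
    rw [hS, hR, mpow_mul_mpow hσ, hc, add_neg_cancel, mpow_zero hσ.1]
  have hRS : R * S = 1 := by
    rw [hS, hR, mpow_mul_mpow hσ, hc, neg_add_cancel, mpow_zero hσ.1]
  have hSh : Sᴴ = S := (mpow_posSemidef hσ.posSemidef _).1.eq
  have hRh : Rᴴ = R := (mpow_posSemidef hσ.posSemidef _).1.eq
  have hM : (S * ρ * S).PosSemidef := by
    have := hρ.conjTranspose_mul_mul_same S; rwa [hSh] at this
  have hPpsd : P.PosSemidef := by
    have := posSemidef_conjTranspose_mul_self P; rwa [hP.eq, hPP] at this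
  have hT : (R * P * R).PosSemidef := by
    have := hPpsd.conjTranspose_mul_mul_same R; rwa [hRh] at this
  have htr : (P * ρ).trace = ((S * ρ * S) * (R * P * R)).trace := by
    have : (S * ρ * S) * (R * P * R) = S * (ρ * (P * R)) := by
      calc _ = S * (ρ * ((S * R) * (P * R))) := by simp only [Matrix.mul_assoc]
        _ = _ := by rw [hSR, Matrix.one_mul]
    rw [this, Matrix.trace_mul_comm S, Matrix.mul_assoc, Matrix.mul_assoc, hRS, Matrix.mul_one,
      Matrix.trace_mul_comm]
  rw [htr]
  refine (trace_holder hM hT hpq).trans ?_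
  rw [← h1r]
  refine mul_le_mul_of_nonneg_left ?_
    (Real.rpow_nonneg (posSemidef_trace_re (mpow_posSemidef hM α)) _)
  exact Real.rpow_le_rpow (posSemidef_trace_re (mpow_posSemidef hT r))
    (trace_mpow_proj_le hσ hP hPP hpq.symm.lt.le) (one_div_nonneg.2 hpq.symm.nonneg)

/-! ### Fidelity and truncation -/

/-- `Re tr A ≤ ‖A‖₁`. -/
lemma trace_re_le_trace_abs (A : Matrix d d ℂ) :
    A.trace.re ≤ (mpow (A * Aᴴ) (1 / 2)).trace.re := by
  have hH : (A * Aᴴ).IsHermitian := isHermitian_mul_conjTranspose_self A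
  set U : Matrix d d ℂ := (hH.eigenvectorUnitary : Matrix d d ℂ) with hU
  have hUU : U * Uᴴ = 1 := unitary_mul_conjTranspose hH
  rw [trace_mpow hH, ← trace_conj_unitary hH A, Matrix.trace, Complex.re_sum]
  refine Finset.sum_le_sum fun i _ => ?_
  rw [← Real.sqrt_eq_rpow, Matrix.diag_apply, ← hU]
  set C := Uᴴ * A * U with hC
  have hCC : C * Cᴴ = diagonal (fun i => ((hH.eigenvalues i : ℝ) : ℂ)) := by
    rw [← diag_conj_unitary hH, ← hU, hC, Matrix.conjTranspose_mul, Matrix.conjTranspose_mul,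
      Matrix.conjTranspose_conjTranspose]
    calc _ = Uᴴ * (A * ((U * Uᴴ) * (Aᴴ * U))) := by simp only [Matrix.mul_assoc]
      _ = _ := by rw [hUU, Matrix.one_mul]; simp only [Matrix.mul_assoc]
  have hl : hH.eigenvalues i = ∑ j, Complex.normSq (C i j) := by
    have h := congrArg Complex.re (congrFun (congrFun hCC i) i)
    rw [Matrix.diagonal_apply_eq, Complex.ofReal_re, Matrix.mul_apply, Complex.re_sum] at h
    rw [← h]
    refine Finset.sum_congr rfl fun j _ => ?_
    rw [Matrix.conjTranspose_apply]
    simp [Complex.normSq_apply]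
  refine Real.le_sqrt_of_sq_le ?_
  rw [hl]
  calc (C i i).re ^ 2 ≤ Complex.normSq (C i i) := by
        rw [Complex.normSq_apply]; nlinarith [mul_self_nonneg (C i i).im]
    _ ≤ _ := Finset.single_le_sum (f := fun j => Complex.normSq (C i j))
        (fun j _ => Complex.normSq_nonneg _) (Finset.mem_univ i)

/-- The positive part `S` of a Hermitian matrix `H`, with the spectral projection `P` onto the
positive eigenspaces. -/
lemma exists_pos_part {H : Matrix d d ℂ} (hH : H.IsHermitian) :
    ∃ P S : Matrix d d ℂ, P.IsHermitian ∧ P * P = P ∧ S.PosSemidef ∧ (S - H).PosSemidef ∧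
      S = P * H := by
  have hc := cfc_continuousOn H
  refine ⟨cfc (fun t : ℝ => if 0 < t then 1 else 0) H, cfc (fun t : ℝ => max t 0) H,
    (cfc_posSemidef fun x _ => by split_ifs <;> simp).1, ?_,
    cfc_posSemidef fun x _ => le_max_right _ _, ?_, ?_⟩
  · rw [← cfc_mul _ _ H (hc _) (hc _)]
    exact cfc_congr fun x _ => by simp
  · have : cfc (fun t : ℝ => max t 0) H - H = cfc (fun t : ℝ => max t 0 - t) H := by
      rw [cfc_sub _ _ H (hc _) (hc _)]
      exact congrArg _ (cfc_id' ℝ H hH).symm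
    rw [this]
    exact cfc_posSemidef fun x _ => sub_nonneg.2 (le_max_left _ _)
  · have : cfc (fun t : ℝ => if 0 < t then 1 else 0) H * H
        = cfc (fun t : ℝ => (if 0 < t then 1 else 0) * t) H := by
      rw [cfc_mul _ _ H (hc _) (hc _)]
      exact congrArg _ (cfc_id' ℝ H hH).symm
    rw [this]
    refine cfc_congr fun x _ => ?_
    by_cases hx : 0 < x
    · simp [hx, hx.le]
    · simp [hx, not_lt.1 hx]

/-- If `ρ ≤ L + S`, then `ρ` can be truncated to a sub-normalized state below `L` whose root
fidelity with `ρ` is at least `1 - tr S`. With `K = L + S`, the truncation is `G ρ Gᴴ` for the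
contraction `G = L^{1/2} K^{-1/2}`. -/
lemma exists_truncation {ρ L S : Matrix d d ℂ} (hρ : ρ.PosSemidef) (hρ1 : ρ.trace = 1)
    (hL : L.PosDef) (hS : S.PosSemidef) (h : (L + S - ρ).PosSemidef) :
    ∃ ρt : Matrix d d ℂ, ρt.PosSemidef ∧ ρt.trace.re ≤ 1 ∧ (L - ρt).PosSemidef ∧
      1 - S.trace.re ≤
        (mpow (mpow ρ (1 / 2) * ρt * mpow ρ (1 / 2)) (1 / 2)).trace.re := by
  set K := L + S with hKdef
  have hK : K.PosDef := hL.add_posSemidef hS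
  set l := mpow L (1 / 2) with hl
  set k := mpow K (1 / 2) with hk
  set m := mpow K (-(1 / 2)) with hm
  have hlh : lᴴ = l := (mpow_posSemidef hL.posSemidef _).1.eq
  have hmh : mᴴ = m := (mpow_posSemidef hK.posSemidef _).1.eq
  have hll : l * l = L := mpow_half_mul_self hL.posSemidef
  have hkk : k * k = K := mpow_half_mul_self hK.posSemidef
  have hmk : m * k = 1 := by
    rw [hm, hk, mpow_mul_mpow hK, neg_add_cancel, mpow_zero hK.1]
  have hkm : k * m = 1 := by
    rw [hm, hk, mpow_mul_mpow hK, add_neg_cancel, mpow_zero hK.1]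
  set G := l * m with hG
  have hGh : Gᴴ = m * l := by rw [hG, Matrix.conjTranspose_mul, hlh, hmh]
  have hmKm : m * K * m = 1 := by
    rw [← hkk, ← Matrix.mul_assoc, hmk, Matrix.one_mul, hkm]
  have hGKG : G * K * Gᴴ = L := by
    rw [hGh, hG]
    calc _ = l * (m * K * m) * l := by simp only [Matrix.mul_assoc]
      _ = L := by rw [hmKm, Matrix.mul_one, hll]
  -- `G` is a contraction because `L ≤ K`.
  have hGG : (1 - Gᴴ * G).PosSemidef := by
    have h1 := hS.conjTranspose_mul_mul_same m
    have h2 : mᴴ * S * m = 1 - Gᴴ * G := by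
      have : Gᴴ * G = m * L * m := by rw [hGh, hG, ← hll]; simp only [Matrix.mul_assoc]
      have hS' : S = K - L := by rw [hKdef]; simp
      rw [this, hmh, hS', Matrix.mul_sub, Matrix.sub_mul, hmKm]
    rwa [h2] at h1
  -- `2 - G - Gᴴ = (1 - G)ᴴ (1 - G) + (1 - Gᴴ G)`.
  have hGre : ((1 - G) + (1 - Gᴴ)).PosSemidef := by
    have h1 := (posSemidef_conjTranspose_mul_self (1 - G)).add hGG
    have h2 : (1 - G)ᴴ * (1 - G) + (1 - Gᴴ * G) = (1 - G) + (1 - Gᴴ) := by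
      rw [Matrix.conjTranspose_sub, Matrix.conjTranspose_one]; noncomm_ring
    rwa [h2] at h1
  have hconj : ∀ A : Matrix d d ℂ, A.IsHermitian → (Gᴴ * A).trace.re = (G * A).trace.re := by
    intro A hA
    have h1 : (Gᴴ * A).trace = star (G * A).trace := by
      rw [← Matrix.trace_conjTranspose, Matrix.conjTranspose_mul G A, hA.eq, Matrix.trace_mul_comm]
    rw [h1]; simp
  refine ⟨G * ρ * Gᴴ, hρ.mul_mul_conjTranspose_same G, ?_, ?_, ?_⟩
  · have h1 := trace_mul_re_nonneg hGG hρ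
    rw [Matrix.sub_mul, Matrix.one_mul, Matrix.trace_sub, hρ1, Complex.sub_re, Complex.one_re] at h1
    rw [Matrix.trace_mul_comm, ← Matrix.mul_assoc]
    linarith
  · have h1 := h.mul_mul_conjTranspose_same G
    rwa [Matrix.mul_sub, Matrix.sub_mul, hGKG] at h1
  · set s := mpow ρ (1 / 2) with hs
    have hsh : sᴴ = s := (mpow_posSemidef hρ _).1.eq
    have hss : s * s = ρ := mpow_half_mul_self hρ
    have hA : s * (G * ρ * Gᴴ) * s = (s * G * s) * (s * G * s)ᴴ := by
      rw [Matrix.conjTranspose_mul (s * G) s, Matrix.conjTranspose_mul s G, hsh, ← hss]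
      simp only [Matrix.mul_assoc]
    have h0 := trace_re_le_trace_abs (s * G * s)
    rw [← hA] at h0
    refine le_trans ?_ h0
    have h1 : (s * G * s).trace = (G * ρ).trace := by
      rw [Matrix.mul_assoc, Matrix.trace_mul_comm, Matrix.mul_assoc, hss]
    rw [h1]
    have h2 := trace_mul_re_nonneg hGre h
    have h3 : (G * K).trace = (k * l).trace := by
      rw [hG, ← hkk]
      have : l * m * (k * k) = l * k := by
        rw [Matrix.mul_assoc, ← Matrix.mul_assoc m k k, hmk, Matrix.one_mul]
      rw [this, Matrix.trace_mul_comm]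
    -- operator monotonicity of the square root gives `tr (K^{1/2} L^{1/2}) ≥ tr L`
    have h4 : L.trace.re ≤ (G * K).trace.re := by
      have h5 := trace_mul_re_nonneg
        (mpow_half_mono hL.posSemidef hK.posSemidef (by rw [hKdef]; simpa using hS))
        (mpow_posSemidef hL.posSemidef (1 / 2))
      rw [← hl, ← hk, Matrix.sub_mul, hll, Matrix.trace_sub, Complex.sub_re] at h5
      rw [h3]; linarith
    have h6 := hconj ρ hρ.1
    have h7 := hconj K hK.1
    have h8 : K.trace.re = L.trace.re + S.trace.re := by
      rw [hKdef, Matrix.trace_add, Complex.add_re]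
    rw [Matrix.add_mul, Matrix.sub_mul, Matrix.sub_mul, Matrix.one_mul, Matrix.mul_sub,
      Matrix.mul_sub] at h2
    simp only [Matrix.trace_add, Matrix.trace_sub, Complex.add_re, Complex.sub_re, hρ1,
      Complex.one_re] at h2
    linarith

end Helpers

/-! ### Smooth max-divergence -/

/-- **The smooth max-divergence is bounded by the minimal (sandwiched) Rényi
divergence**: for a density matrix `ρ`, positive definite `σ`, `ε ∈ (0,1)` and `α > 1`,
there is a sub-normalized state `ρ̃` with `P(ρ̃, ρ) ≤ ε` and
`ρ̃ ≤ exp (D̃_α(ρ‖σ) + g(ε)/(α-1)) σ` where `g(ε) = -ln (1 - √(1-ε²))`. -/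
theorem smooth_dmax_le_sandwiched_renyi {n : ℕ}
    (ρ σ : Matrix (Fin n) (Fin n) ℂ)
    (hρ : ρ.PosSemidef) (hρ1 : ρ.trace = 1) (hσ : σ.PosDef)
    (ε : ℝ) (hε0 : 0 < ε) (hε1 : ε < 1) (α : ℝ) (hα : 1 < α) :
    ∃ ρt : Matrix (Fin n) (Fin n) ℂ,
      ρt.PosSemidef ∧ ρt.trace.re ≤ 1 ∧
      purifiedDist ρt ρ ≤ ε ∧
      ((Real.exp (sandwichedD α ρ σ +
          (-Real.log (1 - Real.sqrt (1 - ε ^ 2))) / (α - 1)) : ℂ) • σ - ρt).PosSemidef := by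
  set s := 1 - Real.sqrt (1 - ε ^ 2) with hs
  have hε2 : 0 < 1 - ε ^ 2 := by nlinarith
  have hs0 : 0 < s := by
    have : Real.sqrt (1 - ε ^ 2) < 1 := by
      rw [Real.sqrt_lt' one_pos]; nlinarith
    linarith
  have hα1 : 0 < α - 1 := by linarith
  have hα0 : 0 < α := by linarith
  set e := sandwichedD α ρ σ + (-Real.log s) / (α - 1) with he
  set L : Matrix (Fin n) (Fin n) ℂ := (Real.exp e : ℂ) • σ with hLdef
  have hLpd : L.PosDef := hσ.smul (by exact_mod_cast Real.exp_pos e)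
  obtain ⟨P, S, hP, hPP, hS, hSH, hSP⟩ := exists_pos_part (hρ.1.sub hLpd.1)
  have hKρ : (L + S - ρ).PosSemidef := by
    have : L + S - ρ = S - (ρ - L) := by abel
    rwa [this]
  obtain ⟨ρt, h1, h2, h3, h4⟩ := exists_truncation hρ hρ1 hLpd hS hKρ
  -- The weight of `ρ` above `L` is at most `s`.
  have hSs : S.trace.re ≤ s := by
    by_cases hS0 : S.trace.re ≤ 0
    · linarith
    push Not at hS0
    set p := (P * ρ).trace.re with hp
    set q := (P * σ).trace.re with hq
    have hPpsd : P.PosSemidef := by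
      have := posSemidef_conjTranspose_mul_self P; rwa [hP.eq, hPP] at this
    have hq0 : 0 ≤ q := trace_mul_re_nonneg hPpsd hσ.posSemidef
    have hStr : S.trace.re = p - Real.exp e * q := by
      rw [hSP, Matrix.mul_sub, Matrix.trace_sub, Complex.sub_re, hLdef, Matrix.mul_smul,
        Matrix.trace_smul, smul_eq_mul, Complex.re_ofReal_mul]
    have hep := Real.exp_pos e
    have hp0 : 0 < p := by nlinarith [mul_nonneg hep.le hq0]
    have hSp : S.trace.re ≤ p := by nlinarith [mul_nonneg hep.le hq0]
    have hqp : Real.exp e * q ≤ p := by linarith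
    have hdp := proj_data_processing hρ hσ hP hPP hα
    rw [← hp, ← hq] at hdp
    have heD : e = 1 / (α - 1) * Real.log
        (((mpow (mpow σ ((1 - α) / (2 * α)) * ρ * mpow σ ((1 - α) / (2 * α))) α).trace).re)
        + (-Real.log s) / (α - 1) := he
    set Q := (mpow (mpow σ ((1 - α) / (2 * α)) * ρ * mpow σ ((1 - α) / (2 * α))) α).trace.re
      with hQ
    have hQ0 : 0 ≤ Q := by
      refine posSemidef_trace_re (mpow_posSemidef ?_ α)
      have := hρ.conjTranspose_mul_mul_same (mpow σ ((1 - α) / (2 * α)))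
      rwa [(mpow_posSemidef hσ.posSemidef _).1.eq] at this
    have hQpos : 0 < Q := by
      rcases hQ0.lt_or_eq with h | h
      · exact h
      · rw [← h, Real.zero_rpow (by positivity), zero_mul] at hdp
        linarith
    have h1α : 0 < 1 - 1 / α := by
      rw [sub_pos, div_lt_one hα0]; exact hα
    have hqpos : 0 < q := by
      rcases hq0.lt_or_eq with h | h
      · exact h
      · rw [← h, Real.zero_rpow h1α.ne', mul_zero] at hdp
        linarith
    refine hSp.trans ?_
    rw [← Real.log_le_log_iff hp0 hs0]
    -- `log p ≤ (log Q + (α - 1) log q) / α`, `e + log q ≤ log p`, `(α - 1) e = log Q - log s`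
    have l1 := Real.log_le_log hp0 hdp
    rw [Real.log_mul (Real.rpow_pos_of_pos hQpos _).ne' (Real.rpow_pos_of_pos hqpos _).ne',
      Real.log_rpow hQpos, Real.log_rpow hqpos] at l1
    have l2 := Real.log_le_log (mul_pos hep hqpos) hqp
    rw [Real.log_mul hep.ne' hqpos.ne', Real.log_exp] at l2
    have l3 : (α - 1) * e = Real.log Q - Real.log s := by
      rw [heD]; field_simp; ring
    have l4 : α * Real.log p ≤ Real.log Q + (α - 1) * Real.log q := by
      have := mul_le_mul_of_nonneg_left l1 hα0.le
      have h5 : α * (1 / α * Real.log Q + (1 - 1 / α) * Real.log q)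
          = Real.log Q + (α - 1) * Real.log q := by field_simp
      linarith
    have l5 := mul_le_mul_of_nonneg_left l2 hα1.le
    linarith
  refine ⟨ρt, h1, h2, ?_, h3⟩
  rw [purifiedDist, gFidelity, hρ1]
  simp only [Complex.one_re, sub_self, mul_zero, Real.sqrt_zero, add_zero]
  rw [Real.sqrt_le_left hε0.le]
  have hf : Real.sqrt (1 - ε ^ 2) ≤
      (mpow (mpow ρ (1 / 2) * ρt * mpow ρ (1 / 2)) (1 / 2)).trace.re := by linarith
  have := pow_le_pow_left₀ (Real.sqrt_nonneg _) hf 2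
  rw [Real.sq_sqrt hε2.le] at this
  linarith
end

section
/- Leftover Hash Lemma against quantum side information: let Z, S, Φ be nonempty finite types, τ : Φ → ℝ nonnegative with ∑_φ τ φ = 1, and f : Φ → Z → S a family of functions that is two-universal, i.e. for all z ≠ z', ∑_φ τ φ · (if f φ z = f φ z' then 1 else 0) = 1/|S|. Let ρ : Z → M_n(ℂ) assign to each z a positive semidefinite matrix, and set ρ_E = ∑_z ρ z. For φ ∈ Φ let R φ be the matrix indexed by S × Fin n with entries R φ ((s,i),(s',j)) = (if s = s' then (∑_{z with f φ z = s} ρ z) i j else 0), and let Π be the matrix with entries Π ((s,i),(s',j)) = (if s = s' then (1/|S|)·(ρ_E i j) else 0). Then for every positive definite n×n complex matrix σ with tr σ = 1, ∑_φ τ φ · ‖R φ − Π‖₁ ≤ √(|S| · ∑_z Re tr(σ⁻¹ · ρ z · ρ z)). -/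
/-!
The trace norm is controlled by a weighted Hilbert–Schmidt norm: for Hermitian `X` and positive
definite `B`, `‖X‖₁² ≤ tr B · tr (B⁻¹ X X)` (`traceNorm_sq_le`). The difference between the
hashed state and the ideal state is block diagonal, with blocks
`X φ s = ∑ z, ([f φ z = s] - 1/|S|) ρ z`; taking `B = 1 ⊗ σ` gives
`‖X φ‖₁² ≤ |S| ∑ s, tr (σ⁻¹ (X φ s)²)`. Jensen's inequality moves the average over `φ` inside the
square, and two-universality makes all terms with `z ≠ z'` vanish on average
(`two_universal_second_moment`), leaving `(1 - 1/|S|) ∑ z, tr (σ⁻¹ (ρ z)²)`.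
-/


open Matrix
open scoped ComplexOrder

/-- The trace norm `‖X‖₁ = tr √(X† X)`. -/
noncomputable def traceNorm {d : Type*} [Fintype d] [DecidableEq d]
    (X : Matrix d d ℂ) : ℝ :=
  ((mpow (Xᴴ * X) (1/2)).trace).re

/-- A weighted form of the trace-norm Cauchy–Schwarz inequality:
`‖X‖₁² ≤ tr B · tr (B⁻¹ X X)`. With `W = sgn X` chosen unitary (`sgn 0 = 1`) we have
`‖X‖₁ = tr (W X)`, and the bound is the discriminant condition for the quadratic polynomial
`t ↦ tr ((t B W - X)ᴴ B⁻¹ (t B W - X)) ≥ 0`. -/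
lemma traceNorm_sq_le {d : Type*} [Fintype d] [DecidableEq d]
    (X B : Matrix d d ℂ) (hX : X.IsHermitian) (hB : B.PosDef) :
    traceNorm X ^ 2 ≤ (B.trace).re * ((B⁻¹ * X * X).trace).re := by
  have hc : ∀ g : ℝ → ℝ, ContinuousOn g (spectrum ℝ X) := fun g =>
    X.finite_real_spectrum.continuousOn g
  have hXs : IsSelfAdjoint X := hX
  have habs : mpow (Xᴴ * X) (1/2) = cfc (fun t : ℝ => |t|) X := by
    have hH : (Xᴴ * X).IsHermitian := isHermitian_conjTranspose_mul_self X
    have h2 : Xᴴ * X = cfc (fun t : ℝ => t ^ 2) X := by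
      rw [cfc_pow_id X 2, hX.eq, sq]
    rw [mpow, dif_pos hH, ← hH.cfc_eq, h2,
      ← cfc_comp' (fun t : ℝ => t ^ (1/2 : ℝ)) (fun t : ℝ => t ^ 2) X
        (((X.finite_real_spectrum).image _).continuousOn _) (hc _)]
    congr 1
    funext t
    rw [← Real.sqrt_eq_rpow, Real.sqrt_sq_eq_abs]
  set s : ℝ → ℝ := fun t => if 0 ≤ t then 1 else -1 with hs
  set W := cfc s X with hW
  have hWh : Wᴴ = W := (cfc_predicate s X : IsSelfAdjoint W)
  have hWW : W * W = 1 := by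
    rw [hW, ← cfc_mul s s X (hc _) (hc _), ← cfc_one ℝ X]
    congr 1
    funext t
    by_cases h : 0 ≤ t <;> simp [hs, h]
  have hWX : W * X = cfc (fun t : ℝ => |t|) X := by
    have h1 : W * X = cfc s X * cfc (id : ℝ → ℝ) X := by rw [cfc_id ℝ X]
    rw [h1, ← cfc_mul s id X (hc _) (hc _)]
    congr 1
    funext t
    by_cases h : 0 ≤ t
    · simp [hs, h, abs_of_nonneg h]
    · simp [hs, h, abs_of_neg (not_le.mp h)]
  have hx : traceNorm X = ((W * X).trace).re := by rw [traceNorm, habs, hWX]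
  have hx' : traceNorm X = ((X * W).trace).re := by rw [hx, trace_mul_comm]
  have hdet : IsUnit B.det := (Matrix.isUnit_iff_isUnit_det B).mp hB.isUnit
  have key : ∀ t : ℝ, 0 ≤ (B.trace).re * (t * t) + (-2 * traceNorm X) * t
      + ((B⁻¹ * X * X).trace).re := by
    intro t
    have h0 := (hB.inv.posSemidef.conjTranspose_mul_mul_same ((t : ℂ) • (B * W) - X)).trace_nonneg
    have h1 := (Complex.le_def.mp h0).1
    have e : ((t : ℂ) • (B * W) - X)ᴴ * B⁻¹ * ((t : ℂ) • (B * W) - X)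
        = ((t * t : ℝ) : ℂ) • (W * B * W) - (t : ℂ) • (W * X) - (t : ℂ) • (X * W)
          + X * B⁻¹ * X := by
      have a1 : B * B⁻¹ = 1 := mul_nonsing_inv B hdet
      have a2 : B⁻¹ * (B * W) = W := by rw [← mul_assoc, nonsing_inv_mul B hdet, one_mul]
      simp only [conjTranspose_sub, conjTranspose_smul, conjTranspose_mul, hWh, hX.eq,
        hB.isHermitian.eq, sub_mul, mul_sub, smul_mul_assoc, mul_smul_comm, mul_assoc, a2]
      rw [← mul_assoc B B⁻¹ X, a1, one_mul]
      simp only [RCLike.star_def, Complex.conj_ofReal, Complex.ofReal_mul,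
        smul_sub, smul_smul]
      abel
    have e1 : (W * B * W).trace = B.trace := by
      rw [trace_mul_comm, ← mul_assoc, hWW, one_mul]
    have e2 : (X * B⁻¹ * X).trace = (B⁻¹ * X * X).trace := by
      rw [mul_assoc, trace_mul_comm]
    rw [e, trace_add, trace_sub, trace_sub, trace_smul, trace_smul, trace_smul, e1, e2] at h1
    simp only [smul_eq_mul, Complex.add_re, Complex.sub_re, Complex.re_ofReal_mul,
      Complex.zero_re, ← hx, ← hx'] at h1
    linarith
  have := discrim_le_zero key
  rw [discrim] at this
  linarith

/-- The block diagonal matrix with blocks `M s`, the block label being the first index. -/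
def blockDiag₁ {S : Type*} [DecidableEq S] {n : ℕ} (M : S → Matrix (Fin n) (Fin n) ℂ) :
    Matrix (S × Fin n) (S × Fin n) ℂ :=
  (blockDiagonal M).submatrix (Equiv.prodComm S (Fin n)) (Equiv.prodComm S (Fin n))

section
variable {S : Type*} [DecidableEq S] {n : ℕ}

lemma blockDiag₁_mul [Fintype S] (M N : S → Matrix (Fin n) (Fin n) ℂ) :
    blockDiag₁ M * blockDiag₁ N = blockDiag₁ (fun s => M s * N s) := by
  rw [blockDiag₁, blockDiag₁, submatrix_mul_equiv, ← blockDiagonal_mul]; rfl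

lemma trace_blockDiag₁ [Fintype S] (M : S → Matrix (Fin n) (Fin n) ℂ) :
    (blockDiag₁ M).trace = ∑ s, (M s).trace := by
  simp [blockDiag₁, Matrix.trace, blockDiagonal_apply, Fintype.sum_prod_type]

lemma isHermitian_blockDiag₁ {M : S → Matrix (Fin n) (Fin n) ℂ} (h : ∀ s, (M s).IsHermitian) :
    (blockDiag₁ M).IsHermitian := by
  rw [IsHermitian, blockDiag₁, conjTranspose_submatrix, blockDiagonal_conjTranspose]
  simp [(h _).eq]

lemma blockDiag₁_const (A : Matrix (Fin n) (Fin n) ℂ) :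
    blockDiag₁ (fun _ : S => A) = kronecker (1 : Matrix S S ℂ) A := by
  exact (one_kronecker A).symm

/-- Taking `B = 1 ⊗ σ` in the weighted Cauchy–Schwarz inequality; `tr B = |S|`. -/
lemma traceNorm_blockDiag₁_sq_le [Fintype S] {M : S → Matrix (Fin n) (Fin n) ℂ}
    (hM : ∀ s, (M s).IsHermitian)
    {σ : Matrix (Fin n) (Fin n) ℂ} (hσ : σ.PosDef) (hσ1 : σ.trace = 1) :
    traceNorm (blockDiag₁ M) ^ 2 ≤
      (Fintype.card S : ℝ) * ∑ s, ((σ⁻¹ * M s * M s).trace).re := by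
  have hB : (blockDiag₁ (fun _ : S => σ)).PosDef := by
    rw [blockDiag₁_const]
    exact PosDef.one.kronecker hσ
  have hdet : IsUnit σ.det := (Matrix.isUnit_iff_isUnit_det σ).mp hσ.isUnit
  have hinv : (blockDiag₁ (fun _ : S => σ))⁻¹ = blockDiag₁ (fun _ : S => σ⁻¹) := by
    apply inv_eq_right_inv
    rw [blockDiag₁_mul, mul_nonsing_inv σ hdet, blockDiag₁_const]
    exact one_kronecker_one
  have h := traceNorm_sq_le _ _ (isHermitian_blockDiag₁ hM) hB
  rw [hinv, blockDiag₁_mul, blockDiag₁_mul, trace_blockDiag₁, trace_blockDiag₁] at h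
  simpa [hσ1] using h

end

/-- Two-universality as a second-moment identity: for any real bilinear form `T`, the centred
hash sums `∑ z, ([f φ z = s] - 1/|S|) ρ z` have no off-diagonal contribution on average. -/
lemma two_universal_second_moment {Z S Φ V : Type*}
    [Fintype Z] [DecidableEq Z] [Fintype S] [DecidableEq S] [Nonempty S] [Fintype Φ]
    [AddCommGroup V] [Module ℝ V]
    (τ : Φ → ℝ) (hτ1 : ∑ φ, τ φ = 1) (f : Φ → Z → S)
    (huniv : ∀ z z', z ≠ z' →
      ∑ φ, τ φ * (if f φ z = f φ z' then (1 : ℝ) else 0) = 1 / (Fintype.card S : ℝ))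
    (ρ : Z → V) (T : V →ₗ[ℝ] V →ₗ[ℝ] ℝ) :
    ∑ φ, τ φ * ∑ s,
      T (∑ z, ((if f φ z = s then (1 : ℝ) else 0) - (Fintype.card S : ℝ)⁻¹) • ρ z)
        (∑ z, ((if f φ z = s then (1 : ℝ) else 0) - (Fintype.card S : ℝ)⁻¹) • ρ z)
      = (1 - (Fintype.card S : ℝ)⁻¹) * ∑ z, T (ρ z) (ρ z) := by
  set c : ℝ := (Fintype.card S : ℝ)⁻¹ with hc
  have hS : (Fintype.card S : ℝ) * c = 1 := by
    rw [hc]; exact mul_inv_cancel₀ (by exact_mod_cast Fintype.card_ne_zero)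
  have hs : ∀ φ z z', ∑ s, ((if f φ z = s then (1 : ℝ) else 0) - c) *
      ((if f φ z' = s then (1 : ℝ) else 0) - c) = (if f φ z = f φ z' then (1 : ℝ) else 0) - c := by
    intro φ z z'
    simp only [sub_mul, mul_sub, Finset.sum_sub_distrib, ← Finset.sum_mul, ← Finset.mul_sum]
    simp only [Finset.sum_ite_eq, Finset.mem_univ, if_true, ite_mul, one_mul, zero_mul,
      Finset.sum_const, Finset.card_univ, nsmul_eq_mul]
    simp only [eq_comm (a := f φ z') (b := f φ z)]
    linear_combination c * hS
  have hφ : ∀ z z', ∑ φ, τ φ * ((if f φ z = f φ z' then (1 : ℝ) else 0) - c)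
      = if z = z' then 1 - c else 0 := by
    intro z z'
    simp only [mul_sub, Finset.sum_sub_distrib, ← Finset.sum_mul, hτ1]
    by_cases h : z = z'
    · simp [h, hτ1]
    · rw [huniv z z' h]; simp [h, hc]
  calc _ = ∑ φ, τ φ * ∑ s, ∑ z, ∑ z', (((if f φ z = s then (1 : ℝ) else 0) - c) *
      ((if f φ z' = s then (1 : ℝ) else 0) - c)) * T (ρ z) (ρ z') := by
        simp only [map_sum, LinearMap.sum_apply, map_smul, LinearMap.smul_apply, smul_eq_mul,
          Finset.mul_sum]
        refine Finset.sum_congr rfl fun φ _ => ?_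
        refine Finset.sum_congr rfl fun s _ => ?_
        rw [Finset.sum_comm]
        refine Finset.sum_congr rfl fun z _ => Finset.sum_congr rfl fun z' _ => ?_
        ring
    _ = ∑ φ, τ φ * ∑ z, ∑ z', ((if f φ z = f φ z' then (1 : ℝ) else 0) - c) * T (ρ z) (ρ z') := by
        refine Finset.sum_congr rfl fun φ _ => ?_
        congr 1
        rw [Finset.sum_comm]
        refine Finset.sum_congr rfl fun z _ => ?_
        rw [Finset.sum_comm]
        refine Finset.sum_congr rfl fun z' _ => ?_
        rw [← hs, Finset.sum_mul]
    _ = ∑ z, ∑ z', (∑ φ, τ φ * ((if f φ z = f φ z' then (1 : ℝ) else 0) - c)) *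
          T (ρ z) (ρ z') := by
        simp only [Finset.mul_sum]
        rw [Finset.sum_comm]
        refine Finset.sum_congr rfl fun z _ => ?_
        rw [Finset.sum_comm]
        refine Finset.sum_congr rfl fun z' _ => ?_
        rw [Finset.sum_mul]
        exact Finset.sum_congr rfl fun φ _ => by ring
    _ = _ := by
        simp only [hφ, ite_mul, zero_mul, Finset.sum_ite_eq, Finset.mem_univ, if_true,
          Finset.mul_sum]

/-- **Leftover Hash Lemma against quantum side information**: if `f` is a two-universal
family of hash functions from `Z` to `S` (with seed distribution `τ`), `ρ z` are the
conditional (sub-normalized) states of a classical-quantum state, `R φ` is the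
classical-quantum state of the hashed value together with the side information, and `Π`
is the corresponding ideal (uniform and decoupled) state, then for every positive
definite density matrix `σ` on the side information,
`∑ φ, τ φ ‖R φ - Π‖₁ ≤ √(|S| ∑ z Re tr (σ⁻¹ ρ z ρ z))`. -/
theorem leftover_hash_lemma {Z S Φ : Type*}
    [Fintype Z] [DecidableEq Z] [Nonempty Z]
    [Fintype S] [DecidableEq S] [Nonempty S]
    [Fintype Φ] [DecidableEq Φ] [Nonempty Φ]
    {n : ℕ}
    (τ : Φ → ℝ) (hτ : ∀ φ, 0 ≤ τ φ) (hτ1 : ∑ φ, τ φ = 1)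
    (f : Φ → Z → S)
    (huniv : ∀ z z', z ≠ z' →
      ∑ φ, τ φ * (if f φ z = f φ z' then (1 : ℝ) else 0) = 1 / (Fintype.card S : ℝ))
    (ρ : Z → Matrix (Fin n) (Fin n) ℂ) (hρ : ∀ z, (ρ z).PosSemidef)
    (σ : Matrix (Fin n) (Fin n) ℂ) (hσ : σ.PosDef) (hσ1 : σ.trace = 1) :
    ∑ φ, τ φ *
      traceNorm
        ((Matrix.of fun p q : S × Fin n =>
            if p.1 = q.1 then
              (∑ z ∈ Finset.univ.filter (fun z => f φ z = p.1), ρ z) p.2 q.2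
            else 0) -
          (Matrix.of fun p q : S × Fin n =>
            if p.1 = q.1 then ((Fintype.card S : ℂ))⁻¹ * (∑ z, ρ z) p.2 q.2 else 0)) ≤
    Real.sqrt ((Fintype.card S : ℝ) * ∑ z, ((σ⁻¹ * ρ z * ρ z).trace).re) := by
  classical
  set c : ℝ := (Fintype.card S : ℝ)⁻¹ with hc
  set X : Φ → S → Matrix (Fin n) (Fin n) ℂ := fun φ s =>
    ∑ z, ((if f φ z = s then (1 : ℝ) else 0) - c) • ρ z with hXdef
  have hX : ∀ φ s, (X φ s).IsHermitian := fun φ s =>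
    isSelfAdjoint_sum _ fun z _ => (IsSelfAdjoint.all _).smul (hρ z).isHermitian
  have hmat : ∀ φ, ((Matrix.of fun p q : S × Fin n =>
            if p.1 = q.1 then
              (∑ z ∈ Finset.univ.filter (fun z => f φ z = p.1), ρ z) p.2 q.2
            else 0) -
          (Matrix.of fun p q : S × Fin n =>
            if p.1 = q.1 then ((Fintype.card S : ℂ))⁻¹ * (∑ z, ρ z) p.2 q.2 else 0))
      = blockDiag₁ (X φ) := by
    intro φ
    ext ⟨s, i⟩ ⟨s', j⟩
    by_cases h : s = s'
    · subst h
      simp [blockDiag₁, blockDiagonal_apply, hXdef, hc, Matrix.sum_apply,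
        Finset.sum_sub_distrib, Finset.mul_sum, Finset.sum_filter, sub_smul]
      exact Finset.sum_congr rfl fun z _ => by split_ifs <;> rfl
    · simp [blockDiag₁, blockDiagonal_apply, h]
  simp only [hmat]
  let T : Matrix (Fin n) (Fin n) ℂ →ₗ[ℝ] Matrix (Fin n) (Fin n) ℂ →ₗ[ℝ] ℝ :=
    LinearMap.mk₂ ℝ (fun a b => ((σ⁻¹ * a * b).trace).re)
      (fun _ _ _ => by simp [mul_add, add_mul])
      (fun _ _ _ => by simp)
      (fun _ _ _ => by simp [mul_add])
      (fun _ _ _ => by simp)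
  have hT : ∀ z, 0 ≤ T (ρ z) (ρ z) := by
    intro z
    have h0 := (hσ.inv.posSemidef.conjTranspose_mul_mul_same (ρ z)).trace_nonneg
    rw [(hρ z).isHermitian.eq, mul_assoc, trace_mul_comm] at h0
    exact (Complex.le_def.mp h0).1
  have hmom := two_universal_second_moment τ hτ1 f huniv ρ T
  apply Real.le_sqrt_of_sq_le
  calc (∑ φ, τ φ * traceNorm (blockDiag₁ (X φ))) ^ 2
      ≤ ∑ φ, τ φ * traceNorm (blockDiag₁ (X φ)) ^ 2 :=
        Real.pow_arith_mean_le_arith_mean_pow_of_even _ _ _ (fun φ _ => hτ φ) hτ1 even_two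
    _ ≤ ∑ φ, τ φ * ((Fintype.card S : ℝ) * ∑ s, T (X φ s) (X φ s)) :=
        Finset.sum_le_sum fun φ _ => mul_le_mul_of_nonneg_left
          (traceNorm_blockDiag₁_sq_le (hX φ) hσ hσ1) (hτ φ)
    _ = (Fintype.card S : ℝ) * ((1 - c) * ∑ z, T (ρ z) (ρ z)) := by
        rw [← hmom, Finset.mul_sum]
        exact Finset.sum_congr rfl fun φ _ => by ring
    _ ≤ (Fintype.card S : ℝ) * ∑ z, T (ρ z) (ρ z) := by
        refine mul_le_mul_of_nonneg_left ?_ (Nat.cast_nonneg _)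
        refine mul_le_of_le_one_left (Finset.sum_nonneg fun z _ => hT z) ?_
        have : 0 ≤ c := by positivity
        linarith
end
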